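/- Let m ≥ n ≥ 1. Then (J_G̃ ∩ A_n) + (J_G̃ ∩ B_m) = J_G̃, i.e. the ideal generated by J_G̃ ∩ A_n together with J_G̃ ∩ B_m equals J_G̃. -/

import Mathlib

open MvPolynomial

noncomputable section

abbrev VIdx (N : ℕ) := Fin N ⊕ Fin N

def vtx {N : ℕ} : VIdx N → Fin N := Sum.elim id id

abbrev PolyS (K : Type) [Field K] (N : ℕ) := MvPolynomial (VIdx N) K

def xv {K : Type} [Field K] {N : ℕ} (i : Fin N) : PolyS K N := X (Sum.inl i)

def yv {K : Type} [Field K] {N : ℕ} (i : Fin N) : PolyS K N := X (Sum.inr i)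

/-- The binomial edge ideal of a graph `G` on `Fin N`. -/
def beIdeal {K : Type} [Field K] {N : ℕ} (G : SimpleGraph (Fin N)) : Ideal (PolyS K N) :=
  Ideal.span {f | ∃ i j : Fin N, G.Adj i j ∧ f = xv i * yv j - xv j * yv i}

/-- The ideal `A_n = (x_1,…,x_n,y_1,…,y_n)`. -/
def idealA {K : Type} [Field K] {N : ℕ} (n : ℕ) : Ideal (PolyS K N) :=
  Ideal.span {f | ∃ v : VIdx N, (vtx v).val < n ∧ f = X v}

/-- The ideal `B_m = (x_{n+1},…,x_{n+m},y_{n+1},…,y_{n+m})` for `n ≥ 2`, and the unit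
ideal for `n = 1`. -/
def idealB {K : Type} [Field K] {N : ℕ} (n : ℕ) : Ideal (PolyS K N) :=
  if n = 1 then ⊤ else Ideal.span {f | ∃ v : VIdx N, n ≤ (vtx v).val ∧ f = X v}

/-- For `m ≥ n ≥ 1`, the ideal generated by `J_G̃ ∩ A_n` together with
`J_G̃ ∩ B_m` equals `J_G̃`, where `G̃` is the complete graph on `n + m` vertices. -/
theorem sup_inter_eq_complete
    (K : Type) [Field K] (m n : ℕ) (hn : 1 ≤ n) (hm : n ≤ m) :
    (beIdeal (K := K) (⊤ : SimpleGraph (Fin (n + m))) ⊓ idealA n) ⊔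
        (beIdeal (K := K) (⊤ : SimpleGraph (Fin (n + m))) ⊓ idealB n) =
      beIdeal (K := K) (⊤ : SimpleGraph (Fin (n + m))) := by
  apply le_antisymm (sup_le inf_le_left inf_le_left)
  conv_lhs => unfold beIdeal
  rw [Ideal.span_le]
  rintro f ⟨i, j, hij, rfl⟩
  have hJ : (xv i * yv j - xv j * yv i : PolyS K (n + m)) ∈
      beIdeal (K := K) (⊤ : SimpleGraph (Fin (n + m))) :=
    Ideal.subset_span ⟨i, j, hij, rfl⟩
  by_cases h : i.val < n
  · refine Ideal.mem_sup_left ⟨hJ, ?_⟩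
    refine Ideal.sub_mem _ (Ideal.mul_mem_right _ _ ?_) (Ideal.mul_mem_left _ _ ?_)
    · exact Ideal.subset_span ⟨Sum.inl i, h, rfl⟩
    · exact Ideal.subset_span ⟨Sum.inr i, h, rfl⟩
  · refine Ideal.mem_sup_right ⟨hJ, ?_⟩
    unfold idealB
    split_ifs with h1
    · exact Submodule.mem_top
    · refine Ideal.sub_mem _ (Ideal.mul_mem_right _ _ ?_) (Ideal.mul_mem_left _ _ ?_)
      · exact Ideal.subset_span ⟨Sum.inl i, not_lt.mp h, rfl⟩
      · exact Ideal.subset_span ⟨Sum.inr i, not_lt.mp h, rfl⟩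

end
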